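/- For every positive integer n, the distributions of depth and drp agree on the alternating group: ∑_{π ∈ 𝔖_n, sign(π)=1} q^{depth(π)} = ∑_{π ∈ 𝔖_n, sign(π)=1} q^{drp(π)} as polynomials in q over the integers, and likewise ∑_{π ∈ 𝔖_n, sign(π)=−1} q^{depth(π)} = ∑_{π ∈ 𝔖_n, sign(π)=−1} q^{drp(π)}. -/

import Mathlib

open Finset

/-- The one-line notation value of `π` at position `k ∈ {1,…,n}`:
`oneLine π k = π(k)` with `1`-indexed positions and values. -/
def oneLine {n : ℕ} (π : Equiv.Perm (Fin n)) (k : ℕ) : ℕ :=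
  if h : k - 1 < n then ((π ⟨k - 1, h⟩ : Fin n) : ℕ) + 1 else k

/-- `SUC(π) = {i ∈ {1,…,n-1} : π(i+1) = π(i)+1}` (position set). -/
def SUC {n : ℕ} (π : Equiv.Perm (Fin n)) : Finset ℕ :=
  (Finset.Icc 1 (n - 1)).filter (fun i => oneLine π (i + 1) = oneLine π i + 1)

/-- `FIX(π) = {i ∈ {1,…,n-1} : π(i) = i}` (position set). -/
def FIX {n : ℕ} (π : Equiv.Perm (Fin n)) : Finset ℕ :=
  (Finset.Icc 1 (n - 1)).filter (fun i => oneLine π i = i)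

/-- `Asc₂(π) = {π(i+1) : i ∈ {1,…,n-1}, π(i+1) ≥ π(i)+2}` (value set). -/
def Asc2 {n : ℕ} (π : Equiv.Perm (Fin n)) : Finset ℕ :=
  ((Finset.Icc 1 (n - 1)).filter (fun i => oneLine π i + 2 ≤ oneLine π (i + 1))).image
    (fun i => oneLine π (i + 1))

/-- `Des(π) = {π(i+1) : i ∈ {1,…,n-1}, π(i) > π(i+1)}` (value set). -/
def DesSet {n : ℕ} (π : Equiv.Perm (Fin n)) : Finset ℕ :=
  ((Finset.Icc 1 (n - 1)).filter (fun i => oneLine π (i + 1) < oneLine π i)).image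
    (fun i => oneLine π (i + 1))

/-- `Suc(π) = {π(i+1) : i ∈ {1,…,n-1}, π(i+1) = π(i)+1}` (value set). -/
def SucSet {n : ℕ} (π : Equiv.Perm (Fin n)) : Finset ℕ :=
  ((Finset.Icc 1 (n - 1)).filter (fun i => oneLine π (i + 1) = oneLine π i + 1)).image
    (fun i => oneLine π (i + 1))

/-- `Aexc(π) = {π(i) : i ∈ {2,…,n}, π(i) < i}` (value set). -/
def Aexc {n : ℕ} (π : Equiv.Perm (Fin n)) : Finset ℕ :=
  ((Finset.Icc 2 n).filter (fun i => oneLine π i < i)).image (fun i => oneLine π i)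

/-- `Êxc(π) = {π(i) : i ∈ {2,…,n}, π(i) > i}` (value set). -/
def ExcHat {n : ℕ} (π : Equiv.Perm (Fin n)) : Finset ℕ :=
  ((Finset.Icc 2 n).filter (fun i => i < oneLine π i)).image (fun i => oneLine π i)

/-- `F̂ix(π) = {π(i) : i ∈ {2,…,n}, π(i) = i}` (value set). -/
def FixHat {n : ℕ} (π : Equiv.Perm (Fin n)) : Finset ℕ :=
  ((Finset.Icc 2 n).filter (fun i => oneLine π i = i)).image (fun i => oneLine π i)

/-- `depth(π) = ∑_{i : π(i) > i} (π(i) − i)`. -/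
def depthStat {n : ℕ} (π : Equiv.Perm (Fin n)) : ℕ :=
  ∑ i ∈ (Finset.Icc 1 n).filter (fun i => i < oneLine π i), (oneLine π i - i)

/-- `drp(π) = ∑_{i ∈ {1,…,n-1} : π(i) > π(i+1)} (π(i) − π(i+1))`. -/
def drpStat {n : ℕ} (π : Equiv.Perm (Fin n)) : ℕ :=
  ∑ i ∈ (Finset.Icc 1 (n - 1)).filter (fun i => oneLine π (i + 1) < oneLine π i),
    (oneLine π i - oneLine π (i + 1))

/-- `exc(π) = |{i ∈ {1,…,n} : π(i) > i}|`. -/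
def excNum {n : ℕ} (π : Equiv.Perm (Fin n)) : ℕ :=
  ((Finset.Icc 1 n).filter (fun i => i < oneLine π i)).card

/-- `nexc(π) = |{i ∈ {1,…,n} : π(i) < i}|`. -/
def nexcNum {n : ℕ} (π : Equiv.Perm (Fin n)) : ℕ :=
  ((Finset.Icc 1 n).filter (fun i => oneLine π i < i)).card

/-- `des(π) = |{i ∈ {1,…,n-1} : π(i) > π(i+1)}|`. -/
def desNum {n : ℕ} (π : Equiv.Perm (Fin n)) : ℕ :=
  ((Finset.Icc 1 (n - 1)).filter (fun i => oneLine π (i + 1) < oneLine π i)).card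

/-- `asc(π) = |{i ∈ {1,…,n-1} : π(i) < π(i+1)}|`. -/
def ascNum {n : ℕ} (π : Equiv.Perm (Fin n)) : ℕ :=
  ((Finset.Icc 1 (n - 1)).filter (fun i => oneLine π i < oneLine π (i + 1))).card

/-- `inv(π) = |{(i,j) : 1 ≤ i < j ≤ n, π(i) > π(j)}|`. -/
def invNum {n : ℕ} (π : Equiv.Perm (Fin n)) : ℕ :=
  (((Finset.Icc 1 n) ×ˢ (Finset.Icc 1 n)).filter
    (fun p : ℕ × ℕ => p.1 < p.2 ∧ oneLine π p.2 < oneLine π p.1)).card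

section

open Equiv Polynomial

/-- The extension of a permutation of `Fin n` to `Fin (n + 1)` that fixes `0`. -/
def extendZero {n : ℕ} (e : Perm (Fin n)) : Perm (Fin (n + 1)) :=
  Perm.decomposeFin.symm (0, e)

@[simp]
theorem extendZero_zero {n : ℕ} (e : Perm (Fin n)) : extendZero e 0 = 0 := by
  simp [extendZero]

@[simp]
theorem extendZero_succ {n : ℕ} (e : Perm (Fin n)) (i : Fin n) :
    extendZero e i.succ = (e i).succ := by
  simp [extendZero]

theorem extendZero_injective {n : ℕ} :
    Function.Injective (extendZero : Perm (Fin n) → Perm (Fin (n + 1))) := fun _ _ h =>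
  (Prod.ext_iff.1 (Perm.decomposeFin.symm.injective h)).2

theorem extendZero_mul_bijective {n : ℕ} (c : Fin (n + 1) → Perm (Fin (n + 1)))
    (hc : ∀ p, c p p = 0) :
    Function.Bijective fun x : Fin (n + 1) × Perm (Fin n) => extendZero x.2 * c x.1 := by
  rw [Fintype.bijective_iff_injective_and_card]
  refine ⟨?_, by simp [Fintype.card_perm, Nat.factorial_succ]⟩
  rintro ⟨p, e⟩ ⟨p', e'⟩ h
  have h : extendZero e * c p = extendZero e' * c p' := h
  have hp : (extendZero e * c p) p = 0 := by simp [hc]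
  have hp' : (extendZero e * c p) p' = 0 := by simp [h, hc]
  obtain rfl : p = p' := (extendZero e * c p).injective (hp.trans hp'.symm)
  rw [extendZero_injective (mul_right_cancel h)]

/-- A family of statistics attaching to a permutation of `Fin n` a tuple of `n` naturals, the minima
of its arcs, in such a way that inserting a new least letter `0` at place `p` shifts all the minima
by one, adds a new minimum `0`, and if `p = k + 1` replaces the `k`-th minimum by `0`. -/
structure ArcProfile where
  /-- The minima of the arcs. -/
  arc : ∀ {n : ℕ}, Perm (Fin n) → Fin n → ℕ
  /-- The permutation of places that moves the place `p` of the new letter to the front. -/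
  move : ∀ {n : ℕ}, Fin (n + 1) → Perm (Fin (n + 1))
  move_self : ∀ {n : ℕ} (p : Fin (n + 1)), move p p = 0
  move_zero : ∀ {n : ℕ}, move (0 : Fin (n + 1)) = 1
  map_arc : ∀ {n : ℕ} (e : Perm (Fin n)) (p : Fin (n + 1)),
    Finset.univ.val.map (arc (extendZero e * move p)) =
      0 ::ₘ Finset.univ.val.map fun i => if p = i.succ then 0 else arc e i + 1
  arc_swap : ∀ {n : ℕ} (π : Perm (Fin (n + 2))) (j : Fin (n + 2)),
    arc (swap 0 1 * π) j - 1 = arc π j - 1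

/-- The sum of `f` over all the multisets obtained from `M` by inserting a new least letter. -/
noncomputable def insertSum (f : Multiset ℕ → ℤ[X]) (M : Multiset ℕ) : ℤ[X] :=
  f (0 ::ₘ M.map (· + 1)) + (M.map fun m => f (0 ::ₘ 0 ::ₘ (M.map (· + 1)).erase (m + 1))).sum

theorem map_replace_eq_erase {n : ℕ} (a : Fin n → ℕ) (k : Fin n) :
    Finset.univ.val.map (fun i => if k = i then 0 else a i + 1) =
      0 ::ₘ ((Finset.univ.val.map a).map (· + 1)).erase (a k + 1) := by
  have hk : (Finset.univ : Finset (Fin n)).val = k ::ₘ (Finset.univ.erase k).val := by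
    rw [← Finset.insert_val_of_notMem (Finset.notMem_erase k _),
      Finset.insert_erase (Finset.mem_univ k)]
  rw [hk]
  simp only [Multiset.map_cons, if_true, Multiset.erase_cons_head, Multiset.map_map,
    Function.comp_def]
  congr 1
  refine Multiset.map_congr rfl fun i hi => if_neg ?_
  rintro rfl
  exact Finset.univ.notMem_erase k hi

namespace ArcProfile

variable (P : ArcProfile)

/-- The multiset of arc minima. -/
def arcs {n : ℕ} (π : Perm (Fin n)) : Multiset ℕ := Finset.univ.val.map (P.arc π)

theorem sum_perm_succ {n : ℕ} (F : Perm (Fin (n + 1)) → ℤ[X]) :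
    ∑ π, F π = ∑ e : Perm (Fin n), ∑ p, F (extendZero e * P.move p) := by
  rw [← (extendZero_mul_bijective P.move P.move_self).sum_comp F, Fintype.sum_prod_type_right]

theorem sum_arcs_succ {n : ℕ} (f : Multiset ℕ → ℤ[X]) :
    ∑ π : Perm (Fin (n + 1)), f (P.arcs π) = ∑ e : Perm (Fin n), insertSum f (P.arcs e) := by
  rw [P.sum_perm_succ]
  refine Finset.sum_congr rfl fun e _ => ?_
  rw [Fin.sum_univ_succ]
  simp only [arcs, P.map_arc, Fin.succ_inj, map_replace_eq_erase, insertSum]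
  simp [-Fin.univ_val_map, Multiset.map_map, (Fin.succ_ne_zero _).symm]

theorem sum_arcs_eq (Q : ArcProfile) (n : ℕ) (f : Multiset ℕ → ℤ[X]) :
    ∑ π : Perm (Fin n), f (P.arcs π) = ∑ π : Perm (Fin n), f (Q.arcs π) := by
  induction n generalizing f with
  | zero => simp [arcs]
  | succ n ih => rw [P.sum_arcs_succ, Q.sum_arcs_succ, ih]

theorem sum_arc_add {n : ℕ} (e : Perm (Fin n)) (g : ℕ → ℕ) (p : Fin (n + 1)) :
    ∑ j, g (P.arc (extendZero e * P.move p) j) =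
      g 0 + ∑ i, g (if p = i.succ then 0 else P.arc e i + 1) := by
  have h := congrArg (fun M => (M.map g).sum) (P.map_arc e p)
  rwa [Multiset.map_cons, Multiset.sum_cons, Multiset.map_map, Multiset.map_map] at h

theorem card_arc_eq_zero {n : ℕ} (π : Perm (Fin (n + 1))) :
    ∑ j, (if P.arc π j = 0 then 1 else 0) = if π 0 = 0 then 1 else 2 := by
  obtain ⟨⟨p, e⟩, rfl⟩ := (extendZero_mul_bijective P.move P.move_self).2 π
  have hp : (extendZero e * P.move p) p = 0 := by simp [P.move_self]
  have h0 : (extendZero e * P.move p) 0 = 0 ↔ p = 0 := by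
    conv_lhs => rhs; rw [← hp]
    rw [EmbeddingLike.apply_eq_iff_eq, eq_comm]
  simp only [h0]
  rw [P.sum_arc_add e (fun a => if a = 0 then 1 else 0)]
  cases p using Fin.cases with
  | zero => simp [(Fin.succ_ne_zero _).symm]
  | succ k =>
    simp only [Fin.succ_inj, Fin.succ_ne_zero]
    simp

/-- `s` is complementary to the sum of the arc minima. -/
def Complements (s : ∀ {n : ℕ}, Perm (Fin n) → ℕ) : Prop :=
  ∀ {n : ℕ} (π : Perm (Fin n)), s π + ∑ j, P.arc π j = ∑ j : Fin n, (j : ℕ)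

variable {P} {s : ∀ {n : ℕ}, Perm (Fin n) → ℕ}

theorem Complements.add_sum_arc (hs : P.Complements s) {n : ℕ} (π : Perm (Fin n)) :
    s π + ∑ j, P.arc π j = ∑ j : Fin n, (j : ℕ) :=
  hs π

theorem Complements.sum_eq {Q : ArcProfile} {t : ∀ {n : ℕ}, Perm (Fin n) → ℕ}
    (hs : P.Complements s) (ht : Q.Complements t) (n : ℕ) :
    ∑ π : Perm (Fin n), (X : ℤ[X]) ^ s π = ∑ π : Perm (Fin n), (X : ℤ[X]) ^ t π := by
  have h := P.sum_arcs_eq Q n fun M => X ^ ((∑ j : Fin n, (j : ℕ)) - M.sum)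
  convert h using 3 with π _ π _
  · have := hs.add_sum_arc π
    change _ = _ - ∑ j, P.arc π j
    omega
  · have := ht.add_sum_arc π
    change _ = _ - ∑ j, Q.arc π j
    omega

theorem Complements.extendZero (hs : P.Complements s) {n : ℕ} (e : Perm (Fin n)) :
    s (extendZero e) = s e := by
  have h₁ := hs.add_sum_arc (_root_.extendZero e)
  have h₂ := hs.add_sum_arc e
  have h₃ := P.sum_arc_add e id 0
  simp only [P.move_zero, mul_one, id, (Fin.succ_ne_zero _).symm, if_false,
    Finset.sum_add_distrib] at h₃
  rw [Fin.sum_univ_succ (fun j : Fin (n + 1) => (j : ℕ))] at h₁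
  simp only [Fin.val_succ, Finset.sum_add_distrib, Fin.val_zero] at h₁
  omega

theorem Complements.add_sum_pred (hs : P.Complements s) {n : ℕ} (π : Perm (Fin (n + 1))) :
    s π + ∑ j, (P.arc π j - 1) + (n + 1) =
      ∑ j : Fin (n + 1), (j : ℕ) + if π 0 = 0 then 1 else 2 := by
  rw [← P.card_arc_eq_zero, ← hs π, add_assoc, add_assoc, ← Finset.sum_add_distrib]
  have h : ∑ j, (P.arc π j - 1) + (n + 1) = ∑ j, (P.arc π j - 1 + 1) := by
    simp [Finset.sum_add_distrib]
  rw [h]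
  congr 1
  refine Finset.sum_congr rfl fun j _ => ?_
  split_ifs <;> omega

theorem Complements.swap_of_eq_zero (hs : P.Complements s) {n : ℕ} {π : Perm (Fin (n + 2))}
    (h : π 0 = 0) : s (swap 0 1 * π) = s π + 1 := by
  have h₁ := hs.add_sum_pred π
  have h₂ := hs.add_sum_pred (swap 0 1 * π)
  simp only [P.arc_swap] at h₂
  simp [h] at h₁ h₂
  omega

theorem Complements.swap_of_ne (hs : P.Complements s) {n : ℕ} {π : Perm (Fin (n + 2))}
    (h0 : π 0 ≠ 0) (h1 : π 0 ≠ 1) : s (swap 0 1 * π) = s π := by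
  have h₁ := hs.add_sum_pred π
  have h₂ := hs.add_sum_pred (swap 0 1 * π)
  simp only [P.arc_swap] at h₂
  simp [h0, h1, swap_apply_of_ne_of_ne] at h₁ h₂
  omega

theorem Complements.sum_sign_succ (hs : P.Complements s) (n : ℕ) :
    ∑ π : Perm (Fin (n + 2)), ((Perm.sign π : ℤ) : ℤ[X]) * X ^ s π =
      (1 - X) * ∑ e : Perm (Fin (n + 1)), ((Perm.sign e : ℤ) : ℤ[X]) * X ^ s e := by
  let F : Perm (Fin (n + 2)) → ℤ[X] := fun π => ((Perm.sign π : ℤ) : ℤ[X]) * X ^ s π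
  let G : Perm (Fin (n + 2)) → ℤ[X] := fun π => if π 0 = 0 then (1 - X) * F π else 0
  have hF : ∀ π, π 0 = 0 → F π + F (swap 0 1 * π) = (1 - X) * F π := fun π h => by
    simp only [F, hs.swap_of_eq_zero h, Perm.sign_mul, Perm.sign_swap (zero_ne_one' (Fin (n + 2)))]
    push_cast
    ring
  have hFG : ∀ π, F π + F (swap 0 1 * π) = G π + G (swap 0 1 * π) := fun π => by
    by_cases h0 : π 0 = 0
    · simp [G, hF π h0, h0]
    by_cases h1 : π 0 = 1
    · have h := hF (swap 0 1 * π) (by simp [h1])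
      rw [← mul_assoc, swap_mul_self, one_mul, add_comm] at h
      simp [G, h, h1]
    · have h := swap_apply_of_ne_of_ne h0 h1
      simp only [F, G, hs.swap_of_ne h0 h1, Perm.sign_mul, Perm.mul_apply, h, h0, if_false,
        Perm.sign_swap (zero_ne_one' (Fin (n + 2)))]
      push_cast
      ring
  have hswap : ∀ H : Perm (Fin (n + 2)) → ℤ[X], ∑ π, H (swap 0 1 * π) = ∑ π, H π := fun H =>
    Equiv.sum_comp (Equiv.mulLeft (swap 0 1)) H
  have hsum : ∑ π, F π = ∑ π, G π := by
    have h := Finset.sum_congr rfl fun π (_ : π ∈ Finset.univ) => hFG π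
    rw [Finset.sum_add_distrib, Finset.sum_add_distrib, hswap, hswap, ← two_mul, ← two_mul] at h
    exact mul_left_cancel₀ two_ne_zero h
  change ∑ π, F π = _
  rw [hsum, ← Perm.decomposeFin.symm.sum_comp, Fintype.sum_prod_type, Fintype.sum_eq_single 0,
    Finset.mul_sum]
  · refine Finset.sum_congr rfl fun e _ => ?_
    have h := hs.extendZero e
    rw [_root_.extendZero] at h
    simp [G, F, h]
  · intro p hp
    simp [G, hp]

theorem Complements.sum_sign (hs : P.Complements s) (n : ℕ) :
    ∑ π : Perm (Fin (n + 1)), ((Perm.sign π : ℤ) : ℤ[X]) * X ^ s π = (1 - X) ^ n := by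
  induction n with
  | zero =>
    have h := hs.add_sum_arc (1 : Perm (Fin 1))
    simp only [Finset.univ_unique, Finset.sum_singleton, Fin.default_eq_zero, Fin.val_zero] at h
    have h0 : s (1 : Perm (Fin 1)) = 0 := by omega
    rw [Fintype.sum_eq_single (1 : Perm (Fin 1)) fun π hπ => (hπ (Subsingleton.elim π 1)).elim, h0]
    simp
  | succ n ih => rw [hs.sum_sign_succ, ih, pow_succ']

theorem Complements.sum_filter_sign_eq {Q : ArcProfile} {t : ∀ {n : ℕ}, Perm (Fin n) → ℕ}
    (hs : P.Complements s) (ht : Q.Complements t) (n : ℕ) {ε : ℤ} (hε : ε = 1 ∨ ε = -1) :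
    ∑ π : Perm (Fin (n + 1)) with (Perm.sign π : ℤ) = ε, (X : ℤ[X]) ^ s π =
      ∑ π : Perm (Fin (n + 1)) with (Perm.sign π : ℤ) = ε, (X : ℤ[X]) ^ t π := by
  have key : ∀ u : Perm (Fin (n + 1)) → ℕ,
      2 * ∑ π : Perm (Fin (n + 1)) with (Perm.sign π : ℤ) = ε, (X : ℤ[X]) ^ u π =
        ∑ π, (X : ℤ[X]) ^ u π + (ε : ℤ[X]) * ∑ π, ((Perm.sign π : ℤ) : ℤ[X]) * X ^ u π := by
    intro u
    rw [Finset.sum_filter, Finset.mul_sum, Finset.mul_sum, ← Finset.sum_add_distrib]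
    refine Finset.sum_congr rfl fun π _ => ?_
    rcases Int.units_eq_one_or (Perm.sign π) with h | h <;> rcases hε with rfl | rfl <;>
      simp [h] <;> ring
  apply mul_left_cancel₀ (two_ne_zero (α := ℤ[X]))
  rw [key, key, hs.sum_eq ht, hs.sum_sign, ht.sum_sign]

end ArcProfile

/-- The arcs of the functional digraph `i → π i`. -/
def cycleProfile : ArcProfile where
  arc π j := min (j : ℕ) (π j)
  move p := swap 0 p
  move_self p := swap_apply_right 0 p
  move_zero := swap_self 0
  map_arc e p := by
    rw [Fin.univ_succ, Finset.cons_val, Multiset.map_cons, Finset.map_val, Multiset.map_map]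
    congr 1
    refine Multiset.map_congr rfl fun i _ => ?_
    by_cases h : p = i.succ
    · simp [h]
    · have hi : swap 0 p i.succ = i.succ := swap_apply_of_ne_of_ne (Fin.succ_ne_zero i) (Ne.symm h)
      simp [hi, h]
  arc_swap π j := by
    rw [Perm.mul_apply, swap_apply_def]
    split_ifs with h h <;> simp [h]

/-- The letter of the word `π` at place `j`, with the convention that `π` is followed by letters
exceeding all others. -/
def wordVal {n : ℕ} (π : Perm (Fin n)) (j : ℕ) : ℕ :=
  if h : j < n then π ⟨j, h⟩ else n

theorem wordVal_extendZero_lt {n : ℕ} (e : Perm (Fin n)) (p : Fin (n + 1)) {j : ℕ} (hj : j < p) :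
    wordVal (extendZero e * p.cycleRange) j = wordVal e j + 1 := by
  have h₁ : j < n := by omega
  have h₂ : (⟨j, by omega⟩ : Fin (n + 1)) = p.succAbove ⟨j, h₁⟩ := by
    rw [Fin.succAbove_of_castSucc_lt _ _ (by simpa [Fin.lt_def] using hj)]
    rfl
  rw [wordVal, dif_pos (by omega), wordVal, dif_pos h₁, h₂, Perm.mul_apply,
    Fin.cycleRange_succAbove, extendZero_succ, Fin.val_succ]

theorem wordVal_extendZero_self {n : ℕ} (e : Perm (Fin n)) (p : Fin (n + 1)) :
    wordVal (extendZero e * p.cycleRange) p = 0 := by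
  rw [wordVal, dif_pos p.isLt, Fin.eta, Perm.mul_apply, Fin.cycleRange_self, extendZero_zero,
    Fin.val_zero]

theorem wordVal_extendZero_succ {n : ℕ} (e : Perm (Fin n)) (p : Fin (n + 1)) {j : ℕ}
    (hj : p ≤ j) : wordVal (extendZero e * p.cycleRange) (j + 1) = wordVal e j + 1 := by
  by_cases h₁ : j < n
  · have h₂ : (⟨j + 1, by omega⟩ : Fin (n + 1)) = p.succAbove ⟨j, h₁⟩ := by
      rw [Fin.succAbove_of_le_castSucc _ _ (by simpa [Fin.le_def] using hj)]
      rfl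
    rw [wordVal, dif_pos (by omega), wordVal, dif_pos h₁, h₂, Perm.mul_apply,
      Fin.cycleRange_succAbove, extendZero_succ, Fin.val_succ]
  · rw [wordVal, dif_neg (by omega), wordVal, dif_neg h₁]

theorem wordVal_swap_sub_one {n : ℕ} (π : Perm (Fin (n + 2))) (j : ℕ) :
    wordVal (swap 0 1 * π) j - 1 = wordVal π j - 1 := by
  unfold wordVal
  split_ifs with hj
  · rw [Perm.mul_apply, swap_apply_def]
    split_ifs with h h <;> simp [h]
  · rfl

/-- The pairs of consecutive letters of the word `π`. -/
def wordProfile : ArcProfile where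
  arc π j := min (wordVal π j) (wordVal π (j + 1))
  move p := p.cycleRange
  move_self p := Fin.cycleRange_self p
  move_zero := Fin.cycleRange_zero _
  map_arc {n} e p := by
    rw [Fin.univ_succAbove n p, Finset.cons_val, Multiset.map_cons, Finset.map_val,
      Multiset.map_map]
    congr 1
    · simp [wordVal_extendZero_self]
    refine Multiset.map_congr rfl fun i _ => ?_
    simp only [Function.comp_apply, Fin.coe_succAboveEmb]
    rcases lt_or_ge (i : ℕ) p with h | h
    · rw [Fin.succAbove_of_castSucc_lt _ _ (by simpa [Fin.lt_def] using h), Fin.val_castSucc,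
        wordVal_extendZero_lt e p h]
      by_cases hp : p = i.succ
      · have h' : (i : ℕ) + 1 = p := by simp [hp]
        rw [if_pos hp, h', wordVal_extendZero_self, Nat.min_zero]
      · have h' : (i : ℕ) + 1 < p := lt_of_le_of_ne h fun h' => hp (Fin.ext h'.symm)
        rw [if_neg hp, wordVal_extendZero_lt e p h', Nat.add_min_add_right]
    · have hp : p ≠ i.succ := by
        rintro rfl
        simp at h
      rw [Fin.succAbove_of_le_castSucc _ _ (by simpa [Fin.le_def] using h), Fin.val_succ,
        wordVal_extendZero_succ e p h, wordVal_extendZero_succ e p (by omega), if_neg hp,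
        Nat.add_min_add_right]
  arc_swap π j := by
    have h₁ := wordVal_swap_sub_one π j
    have h₂ := wordVal_swap_sub_one π (j + 1)
    omega

theorem oneLine_succ {n : ℕ} (π : Perm (Fin n)) (i : Fin n) : oneLine π (i + 1) = π i + 1 := by
  simp [oneLine]

theorem sum_Icc_eq_sum_fin (n : ℕ) (f : ℕ → ℕ) :
    ∑ i ∈ Finset.Icc 1 n, f i = ∑ i : Fin n, f (i + 1) := by
  rw [Fin.sum_univ_eq_sum_range (fun i => f (i + 1)), Finset.range_eq_Ico,
    Finset.sum_Ico_add' f 0 n 1]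
  rfl

theorem depthStat_eq_sum {n : ℕ} (π : Perm (Fin n)) :
    depthStat π = ∑ i : Fin n, ((π i : ℕ) - i) := by
  rw [depthStat, Finset.sum_filter_of_ne (fun i _ h => by omega), sum_Icc_eq_sum_fin]
  simp [oneLine_succ]

theorem cycleProfile_complements : cycleProfile.Complements depthStat := by
  intro n π
  change depthStat π + _ = _
  rw [depthStat_eq_sum, ← Finset.sum_add_distrib,
    ← Equiv.sum_comp π fun j : Fin n => (j : ℕ)]
  refine Finset.sum_congr rfl fun i _ => ?_
  simp only [cycleProfile]
  omega

theorem drpStat_eq_sum {n : ℕ} (π : Perm (Fin n)) :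
    drpStat π = ∑ i : Fin n, (wordVal π i - wordVal π (i + 1)) := by
  rw [drpStat, Finset.sum_filter_of_ne (fun i _ h => by omega), sum_Icc_eq_sum_fin]
  cases n with
  | zero => rfl
  | succ n =>
    rw [Fin.sum_univ_castSucc]
    have hlast : wordVal π (Fin.last n) - wordVal π (Fin.last n + 1) = 0 := by
      simp [wordVal]
    rw [hlast, add_zero]
    refine Finset.sum_congr rfl fun i _ => ?_
    have h₁ := oneLine_succ π i.castSucc
    have h₂ := oneLine_succ π i.succ
    simp only [Fin.val_castSucc, Fin.val_succ] at h₁ h₂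
    have h₃ : wordVal π i = π i.castSucc := dif_pos (by omega)
    have h₄ : wordVal π (i + 1) = π i.succ := dif_pos (by omega)
    rw [Fin.val_castSucc, h₁, h₂, h₃, h₄]
    omega

theorem wordProfile_complements : wordProfile.Complements drpStat := by
  intro n π
  change drpStat π + _ = _
  rw [drpStat_eq_sum, ← Finset.sum_add_distrib,
    ← Equiv.sum_comp π fun j : Fin n => (j : ℕ)]
  refine Finset.sum_congr rfl fun i _ => ?_
  have h : wordVal π i = π i := by simp [wordVal]
  simp only [wordProfile]
  omega

theorem neg_one_pow_invNum {n : ℕ} (π : Perm (Fin n)) : (-1 : ℤ) ^ invNum π = Perm.sign π := by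
  have h : invNum π = ∑ i : Fin n, ∑ j : Fin n, if i < j ∧ π j < π i then 1 else 0 := by
    rw [invNum, Finset.card_filter, Finset.sum_product, sum_Icc_eq_sum_fin]
    refine Finset.sum_congr rfl fun i _ => ?_
    rw [sum_Icc_eq_sum_fin]
    simp [oneLine_succ]
  rw [h, Perm.sign_eq_prod_prod_Ioi, ← Finset.prod_pow_eq_pow_sum]
  push_cast
  refine Finset.prod_congr rfl fun i _ => ?_
  rw [← Finset.prod_pow_eq_pow_sum, ← Finset.filter_lt_eq_Ioi, Finset.prod_filter]
  refine Finset.prod_congr rfl fun j _ => ?_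
  by_cases hij : i < j
  · rcases lt_or_gt_of_ne (π.injective.ne hij.ne) with h | h <;> simp [hij, h, h.not_gt]
  · simp [hij]

end

/-- the distributions of depth and drp agree on the alternating group
and on its complement. -/
theorem stmt18 (n : ℕ) (hn : 0 < n) :
    ((∑ π ∈ Finset.univ.filter (fun π : Equiv.Perm (Fin n) => (-1 : ℤ) ^ invNum π = 1),
        (Polynomial.X : Polynomial ℤ) ^ depthStat π) =
      ∑ π ∈ Finset.univ.filter (fun π : Equiv.Perm (Fin n) => (-1 : ℤ) ^ invNum π = 1),
        (Polynomial.X : Polynomial ℤ) ^ drpStat π) ∧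
    ((∑ π ∈ Finset.univ.filter (fun π : Equiv.Perm (Fin n) => (-1 : ℤ) ^ invNum π = -1),
        (Polynomial.X : Polynomial ℤ) ^ depthStat π) =
      ∑ π ∈ Finset.univ.filter (fun π : Equiv.Perm (Fin n) => (-1 : ℤ) ^ invNum π = -1),
        (Polynomial.X : Polynomial ℤ) ^ drpStat π) := by
  obtain ⟨m, rfl⟩ : ∃ m, n = m + 1 := ⟨n - 1, by omega⟩
  simp only [neg_one_pow_invNum]
  exact ⟨cycleProfile_complements.sum_filter_sign_eq wordProfile_complements m (.inl rfl),
    cycleProfile_complements.sum_filter_sign_eq wordProfile_complements m (.inr rfl)⟩
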